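/- Let ψ be a Ma-Minda function. Let h be analytic on 𝔻 with h(0) = 0 and h'(0) ≠ 0, satisfying Re(1 + z·h''(z)/h'(z)) > −1/2 for all z ∈ 𝔻, and suppose the function z ↦ (1/z)∫₀^z h(t) dt (with value 0 at z = 0) is subordinate to (ψ(z) − 1)/ψ(z). If f ∈ 𝒜 satisfies f(z) ≠ 0 for z ∈ 𝔻\{0}, f'(z) ≠ 0 for z ∈ 𝔻, and f(z)f''(z)/f'(z)² ≺ h(z), then f ∈ S*(ψ). -/

import Mathlib

open Complex Metric Set

noncomputable section

/-- The open unit disk in `ℂ`. -/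
def 𝔻 : Set ℂ := Metric.ball 0 1

/-- The class `𝒜` of analytic functions on `𝔻` normalized by `f 0 = 0`, `f' 0 = 1`. -/
def IsClassA (f : ℂ → ℂ) : Prop :=
  DifferentiableOn ℂ f 𝔻 ∧ f 0 = 0 ∧ deriv f 0 = 1

/-- `g` is subordinate to `F` on the unit disk. -/
def Subordinate (g F : ℂ → ℂ) : Prop :=
  ∃ ω : ℂ → ℂ, DifferentiableOn ℂ ω 𝔻 ∧ ω 0 = 0 ∧ (∀ z ∈ 𝔻, ω z ∈ 𝔻) ∧
    ∀ z ∈ 𝔻, g z = F (ω z)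

/-- `ψ` is a Ma-Minda function: analytic and univalent on `𝔻`, `Re ψ > 0`, `ψ 0 = 1`,
`ψ' 0 > 0`, with real Taylor coefficients (expressed via `ψ (conj z) = conj (ψ z)`). -/
def MaMinda (ψ : ℂ → ℂ) : Prop :=
  DifferentiableOn ℂ ψ 𝔻 ∧ Set.InjOn ψ 𝔻 ∧ (∀ z ∈ 𝔻, 0 < (ψ z).re) ∧
    ψ 0 = 1 ∧ 0 < (deriv ψ 0).re ∧ (deriv ψ 0).im = 0 ∧
    (∀ z ∈ 𝔻, ψ (starRingEnd ℂ z) = starRingEnd ℂ (ψ z))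

/-- The Ma-Minda starlike class `S*(ψ)`. -/
def StarlikeMM (ψ f : ℂ → ℂ) : Prop :=
  IsClassA f ∧ (∀ z ∈ 𝔻, z ≠ 0 → f z ≠ 0) ∧
    Subordinate (fun z => if z = 0 then 1 else z * deriv f z / f z) ψ

/-- The Ma-Minda convex class `C(ψ)`. -/
def ConvexMM (ψ f : ℂ → ℂ) : Prop :=
  IsClassA f ∧ (∀ z ∈ 𝔻, deriv f z ≠ 0) ∧
    Subordinate (fun z => 1 + z * deriv (deriv f) z / deriv f z) ψ

/-- `f` is starlike of order `α`. -/
def StarlikeOrder (α : ℝ) (f : ℂ → ℂ) : Prop :=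
  IsClassA f ∧ (∀ z ∈ 𝔻, z ≠ 0 → f z ≠ 0) ∧
    ∀ z ∈ 𝔻, z ≠ 0 → α < (z * deriv f z / f z).re

/-- `f` is a (normalized) convex function on `𝔻`. -/
def IsConvexFn (f : ℂ → ℂ) : Prop :=
  IsClassA f ∧ (∀ z ∈ 𝔻, deriv f z ≠ 0) ∧
    ∀ z ∈ 𝔻, 0 < (1 + z * deriv (deriv f) z / deriv f z).re

open Filter Topology

lemma isOpen_D : IsOpen 𝔻 := Metric.isOpen_ball

lemma mem_D {z : ℂ} : z ∈ 𝔻 ↔ ‖z‖ < 1 := by simp [𝔻]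

lemma D_nhds {z : ℂ} (hz : z ∈ 𝔻) : 𝔻 ∈ 𝓝 z := isOpen_D.mem_nhds hz

/-- If `Re (1 + z u'/u) > -1/2` (with junk value at zeros) and `u 0 ≠ 0` then `u` has no zeros. -/
lemma ne_zero_of_re {u : ℂ → ℂ} (hu : DifferentiableOn ℂ u 𝔻) (hu0 : u 0 ≠ 0)
    (hre : ∀ z ∈ 𝔻, (-1/2 : ℝ) < (1 + z * deriv u z / u z).re) :
    ∀ z ∈ 𝔻, u z ≠ 0 := by
  intro z hz hzero
  have hmem : ∀ t ∈ Icc (0:ℝ) 1, (t:ℂ) * z ∈ 𝔻 := by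
    intro t ht
    rw [mem_D] at *
    rw [norm_mul, Complex.norm_real, Real.norm_of_nonneg ht.1]
    nlinarith [ht.2, norm_nonneg z, ht.1]
  have hv : ∀ t ∈ Icc (0:ℝ) 1, HasDerivAt (fun t : ℝ => u ((t:ℂ) * z)) (deriv u (t * z) * z) t := by
    intro t ht
    have h1 : HasDerivAt u (deriv u (t * z)) ((t:ℂ) * z) :=
      ((hu.differentiableAt (D_nhds (hmem t ht)))).hasDerivAt
    have h2 : HasDerivAt (fun s : ℂ => s * z) z (t:ℂ) := by
      simpa using (hasDerivAt_id (t:ℂ)).mul_const z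
    exact (h1.comp (t:ℂ) h2).comp_ofReal
  have hG : ∀ t ∈ Icc (0:ℝ) 1, HasDerivAt (fun t : ℝ => t^3 * ‖u ((t:ℂ) * z)‖^2)
      (3 * t^2 * ‖u ((t:ℂ) * z)‖^2
        + t^3 * (2 * inner ℝ (u ((t:ℂ) * z)) (deriv u (t * z) * z))) t := by
    intro t ht
    have := (hasDerivAt_pow 3 t).mul (hv t ht).norm_sq
    exact this.congr_deriv (by norm_num)
  have hmono : MonotoneOn (fun t : ℝ => t^3 * ‖u ((t:ℂ) * z)‖^2) (Icc 0 1) := by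
    apply monotoneOn_of_deriv_nonneg (convex_Icc 0 1)
    · intro t ht; exact (hG t ht).continuousAt.continuousWithinAt
    · intro t ht; exact (hG t (interior_subset ht)).differentiableAt.differentiableWithinAt
    · intro t ht
      have ht' := interior_subset ht
      rw [(hG t ht').deriv]
      rw [interior_Icc] at ht
      by_cases h0 : u (t * z) = 0
      · simp [h0]
      have key := hre _ (hmem t ht')
      set U := u (t * z)
      set V := deriv u (t * z)
      have e1 : t * inner ℝ U (V * z) = ‖U‖^2 * ((t * z * V / U)).re := by
        have : ((t:ℂ) * z * V) = U * (t * z * V / U) := by field_simp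
        have e2 : t * inner ℝ U (V * z) = (((t:ℂ) * z * V) * (starRingEnd ℂ) U).re := by
          simp [Complex.inner]; ring
        rw [e2, this]
        have : U * (t * z * V / U) * (starRingEnd ℂ) U = ((‖U‖^2 : ℝ) : ℂ) * (t * z * V / U) := by
          rw [mul_right_comm, Complex.mul_conj, Complex.normSq_eq_norm_sq]
        rw [this, Complex.re_ofReal_mul]
        rw [mul_div_cancel_left₀ _ h0]
      have e3 : 3 * t^2 * ‖U‖^2 + t^3 * (2 * inner ℝ U (V * z))
          = t^2 * ‖U‖^2 * (3 + 2 * (t * z * V / U).re) := by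
        linear_combination (2 * t^2) * e1
      rw [e3]
      have : (0:ℝ) ≤ 3 + 2 * (t * z * V / U).re := by
        rw [Complex.add_re, Complex.one_re] at key
        linarith
      positivity
  have hcont : ContinuousAt (fun t : ℝ => u ((t:ℂ) * z)) 0 := (hv 0 (by simp)).continuousAt
  have hev : ∀ᶠ t : ℝ in 𝓝 0, u ((t:ℂ) * z) ≠ 0 := by
    apply hcont.eventually_ne; simpa using hu0
  obtain ⟨t, ht1, ht2⟩ := ((hev.filter_mono nhdsWithin_le_nhds).and
    (Ioo_mem_nhdsGT (show (0:ℝ) < 1 by norm_num))).exists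
  have := hmono (Ioo_subset_Icc_self ht2) (by simp) ht2.2.le
  simp [hzero] at this
  have h3 : 0 < t^3 * ‖u (t*z)‖^2 := by
    have := ht2.1
    have := norm_pos_iff.2 ht1
    positivity
  linarith

/-- Minimum principle for real parts. -/
lemma re_pos_of_sphere {F : ℂ → ℂ} {r : ℝ} (hr : 0 < r) (hF : DiffContOnCl ℂ F (ball 0 r))
    (h : ∀ z, ‖z‖ = r → 0 ≤ (F z).re) (hs : ∃ z, ‖z‖ = r ∧ 0 < (F z).re) :
    ∀ z, ‖z‖ < r → 0 < (F z).re := by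
  intro z hz
  by_contra hcon
  push Not at hcon
  have hE : DiffContOnCl ℂ (fun z => Complex.exp (-F z)) (ball 0 r) :=
    Complex.differentiable_exp.comp_diffContOnCl hF.neg
  have hn : ∀ z, ‖Complex.exp (-F z)‖ = Real.exp (-(F z).re) := by
    intro z; rw [Complex.norm_exp]; simp
  have hle : ∀ y ∈ closure (ball (0:ℂ) r), ‖Complex.exp (-F y)‖ ≤ 1 := by
    intro y hy
    refine Complex.norm_le_of_forall_mem_frontier_norm_le isBounded_ball hE ?_ hy
    intro x hx
    rw [frontier_ball _ hr.ne'] at hx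
    rw [hn]
    have := h x (by simpa using hx)
    simpa using this
  have hmax : IsMaxOn (norm ∘ fun z => Complex.exp (-F z)) (ball 0 r) z := by
    intro y hy
    have := hle y (subset_closure hy)
    simp only [Function.comp, mem_ofPred_eq]
    refine this.trans ?_
    rw [hn]; simpa using hcon
  have heq := Complex.eqOn_closure_of_isPreconnected_of_isMaxOn_norm
    (convex_ball (0:ℂ) r).isPreconnected isOpen_ball hE (by simpa using hz) hmax
  obtain ⟨y, hy, hy'⟩ := hs
  have h1 := heq (show y ∈ closure (ball (0:ℂ) r) by
    rw [closure_ball _ hr.ne']; simp [hy])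
  have h2 := congrArg norm h1
  simp only [Function.const] at h2
  rw [hn, hn, Real.exp_eq_exp] at h2
  linarith

/-- Jack's lemma. -/
lemma jack {w : ℂ → ℂ} {z0 : ℂ} (hd : DifferentiableAt ℂ w z0) (hz0 : z0 ≠ 0) (hw0 : w z0 ≠ 0)
    (hle : ∀ z, ‖z‖ ≤ ‖z0‖ → ‖w z‖ * ‖z0‖ ≤ ‖w z0‖ * ‖z‖) :
    ∃ k : ℝ, 1 ≤ k ∧ z0 * deriv w z0 = k * w z0 := by
  set c := (starRingEnd ℂ) (w z0) with hc
  have hcn : ‖c‖ = ‖w z0‖ := by simp [hc]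
  have hcw : c * w z0 = ((‖w z0‖^2 : ℝ) : ℂ) := by
    rw [mul_comm, hc, Complex.mul_conj, Complex.normSq_eq_norm_sq]
  have hzp : 0 < ‖z0‖ := norm_pos_iff.2 hz0
  have hang : (c * (z0 * deriv w z0)).im = 0 := by
    have h2 : HasDerivAt (fun s : ℂ => z0 * Complex.exp (s * I)) (z0 * I) ((0:ℝ):ℂ) := by
      have h := ((hasDerivAt_id ((0:ℝ):ℂ)).mul_const I).cexp.const_mul z0
      simpa using h
    have h3 : HasDerivAt (fun s : ℂ => Complex.exp (-(s * I))) (-I) ((0:ℝ):ℂ) := by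
      have h := ((hasDerivAt_id ((0:ℝ):ℂ)).mul_const I).neg.cexp
      simpa using h
    have h1 : HasDerivAt w (deriv w z0) (z0 * Complex.exp (((0:ℝ):ℂ) * I)) := by
      simpa using hd.hasDerivAt
    have h4 := (((h1.comp ((0:ℝ):ℂ) h2).mul h3).const_mul c).real_of_complex
    have hmax : IsLocalMax (fun x : ℝ => (c * (w (z0 * Complex.exp (x * I)) *
        Complex.exp (-(x * I)))).re) 0 := by
      refine Filter.Eventually.of_forall fun x => ?_
      have e1 : (c * (w (z0 * Complex.exp (((0:ℝ):ℂ) * I)) *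
        Complex.exp (-(((0:ℝ):ℂ) * I)))).re = ‖w z0‖^2 := by
        simp [hcw, ← Complex.ofReal_pow]
      simp only []
      rw [e1]
      refine (Complex.re_le_norm _).trans ?_
      have e2 : ‖Complex.exp (-((x:ℂ) * I))‖ = 1 := by
        rw [← neg_mul, ← Complex.ofReal_neg, Complex.norm_exp_ofReal_mul_I]
      rw [norm_mul, norm_mul, e2, hcn, mul_one, sq]
      have h5 : ‖z0 * Complex.exp (x * I)‖ = ‖z0‖ := by
        rw [norm_mul, Complex.norm_exp_ofReal_mul_I, mul_one]
      have := hle (z0 * Complex.exp (x * I)) h5.le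
      rw [h5] at this
      have := le_of_mul_le_mul_right this hzp
      gcongr
    have h6 := hmax.hasDerivAt_eq_zero h4
    have h7 : c * (deriv w z0 * (z0 * I) * 1 + w z0 * -I)
        = (c * (z0 * deriv w z0)) * I - (c * w z0) * I := by ring
    simp only [Function.comp, Complex.ofReal_zero, zero_mul, Complex.exp_zero, mul_one,
      neg_zero] at h6
    rw [mul_one] at h7
    rw [h7, hcw] at h6
    simp only [Complex.sub_re, Complex.mul_re _ I, Complex.I_re, Complex.I_im, Complex.ofReal_im,
      Complex.ofReal_re, mul_zero, mul_one, zero_sub, neg_zero, sub_zero] at h6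
    linarith
  have hrad : ‖w z0‖^2 ≤ (c * (z0 * deriv w z0)).re := by
    have h2 : HasDerivAt (fun s : ℂ => s * z0) z0 ((1:ℝ):ℂ) := by
      simpa using (hasDerivAt_id ((1:ℝ):ℂ)).mul_const z0
    have h1 : HasDerivAt w (deriv w z0) (((1:ℝ):ℂ) * z0) := by
      simpa using hd.hasDerivAt
    have h4 := ((h1.comp ((1:ℝ):ℂ) h2).const_mul c).real_of_complex
    have h5 := h4.hasDerivWithinAt (s := Iio 1)
    rw [hasDerivWithinAt_iff_tendsto_slope' (by simp)] at h5
    have e : (c * (deriv w z0 * z0)) = (c * (z0 * deriv w z0)) := by ring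
    rw [e] at h5
    refine ge_of_tendsto h5 ?_
    filter_upwards [Ioo_mem_nhdsLT (show (0:ℝ) < 1 by norm_num)] with t ht
    rw [slope_def_field]
    simp only [Function.comp, Complex.ofReal_one, one_mul]
    rw [hcw, Complex.ofReal_re, le_div_iff_of_neg (by linarith [ht.2])]
    have h6 : (c * w (t * z0)).re ≤ t * ‖w z0‖^2 := by
      refine (Complex.re_le_norm _).trans ?_
      have h7 : ‖(t:ℂ) * z0‖ = t * ‖z0‖ := by
        rw [norm_mul, Complex.norm_real, Real.norm_of_nonneg ht.1.le]
      have h8 := hle (t * z0) (by rw [h7]; nlinarith [ht.2])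
      rw [h7, ← mul_assoc] at h8
      have h9 := le_of_mul_le_mul_right h8 hzp
      rw [norm_mul, hcn]
      nlinarith [norm_nonneg (w z0)]
    nlinarith
  have hwp : 0 < ‖w z0‖ := norm_pos_iff.2 hw0
  refine ⟨(c * (z0 * deriv w z0)).re / ‖w z0‖^2, ?_, ?_⟩
  · rw [le_div_iff₀ (by positivity)]; linarith
  · have h1 : c * (z0 * deriv w z0) = (((c * (z0 * deriv w z0)).re : ℝ) : ℂ) := by
      apply Complex.ext <;> simp [hang]
    have hc0 : c ≠ 0 := by rw [← norm_pos_iff, hcn]; exact hwp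
    apply mul_left_cancel₀ hc0
    have hne : ((‖w z0‖^2 : ℝ) : ℂ) ≠ 0 := by exact_mod_cast (by positivity : ‖w z0‖^2 ≠ 0)
    rw [mul_left_comm c _ (w z0), hcw, Complex.ofReal_div, div_mul_cancel₀ _ hne]
    exact h1

/-- Supporting half-planes for a convex function, on circles. -/
lemma circle_support {Q : ℂ → ℂ} (hQ : DifferentiableOn ℂ Q 𝔻) (hQ' : ∀ z ∈ 𝔻, deriv Q z ≠ 0)
    (hP : ∀ z ∈ 𝔻, 0 < (1 + z * deriv (deriv Q) z / deriv Q z).re)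
    {w ω : ℂ} (hw : w ∈ 𝔻) (hw0 : w ≠ 0) (hn : ‖ω‖ = ‖w‖) (hne : ω ≠ w) :
    0 < ((Q w - Q ω) / (w * deriv Q w)).re := by
  have hQd : DifferentiableOn ℂ (deriv Q) 𝔻 := hQ.deriv isOpen_D
  have hQdd : DifferentiableOn ℂ (deriv (deriv Q)) 𝔻 := hQd.deriv isOpen_D
  set P : ℂ → ℂ := fun z => 1 + z * deriv (deriv Q) z / deriv Q z with hPdef
  have hPd : DifferentiableOn ℂ P 𝔻 :=
    ((differentiableOn_id.mul hQdd).div hQd hQ').const_add 1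
  set K : ℂ → ℂ := fun z => z * deriv Q z with hK
  have hKd : ∀ z ∈ 𝔻, HasDerivAt K (P z * deriv Q z) z := by
    intro z hz
    have := (hasDerivAt_id z).mul (hQd.differentiableAt (D_nhds hz)).hasDerivAt
    refine this.congr_deriv ?_
    have := hQ' z hz
    simp only [hPdef, id]; field_simp
  have hc : K w ≠ 0 := mul_ne_zero hw0 (hQ' w hw)
  set e : ℝ → ℂ := fun θ => w * Complex.exp (θ * I) with he
  have hen : ∀ θ, ‖e θ‖ = ‖w‖ := by
    intro θ; simp only [he]; rw [norm_mul, Complex.norm_exp_ofReal_mul_I, mul_one]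
  have heD : ∀ θ, e θ ∈ 𝔻 := by
    intro θ; rw [mem_D, hen]; exact mem_D.1 hw
  have hed : ∀ θ : ℝ, HasDerivAt e (e θ * I) θ := by
    intro θ
    have h := ((hasDerivAt_id (θ:ℂ)).mul_const I).cexp.const_mul w
    have := h.comp_ofReal
    simpa [he, mul_assoc] using this
  have hec : Continuous e := by
    rw [continuous_iff_continuousAt]; exact fun θ => (hed θ).continuousAt
  have hPc : Continuous (fun θ => P (e θ)) := by
    rw [continuous_iff_continuousAt]
    intro θ
    exact ContinuousAt.comp (g := P) (hPd.differentiableAt (D_nhds (heD θ))).continuousAt hec.continuousAt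
  set A : ℝ → ℂ := fun θ => ∫ τ in (0:ℝ)..θ, P (e τ) with hA
  have hAd : ∀ θ, HasDerivAt A (P (e θ)) θ := fun θ => hPc.integral_hasStrictDerivAt 0 θ |>.hasDerivAt
  have hA0 : A 0 = 0 := by simp [hA]
  have hP0 : P 0 = 1 := by simp [hPdef]
  have hA2 : A (2 * Real.pi) = 2 * Real.pi := by
    have hdc : DiffContOnCl ℂ (fun z => P (w * z)) (ball 0 |1|) := by
      apply DifferentiableOn.diffContOnCl
      rw [abs_one, closure_ball _ one_ne_zero]
      refine hPd.comp (by fun_prop) ?_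
      intro z hz
      have h1 : ‖z‖ ≤ 1 := by simpa using hz
      have h2 := mem_D.1 hw
      rw [mem_D, norm_mul]
      nlinarith [norm_nonneg w, norm_nonneg z]
    have := hdc.circleAverage
    rw [Real.circleAverage] at this
    simp only [circleMap_zero, Complex.ofReal_one, one_mul, mul_zero, hP0] at this
    have h3 : A (2 * Real.pi) = ∫ θ in (0:ℝ)..2 * Real.pi, P (w * Complex.exp (θ * I)) := rfl
    rw [← h3] at this
    have hpi : ((2 * Real.pi : ℝ) : ℂ) ≠ 0 := by exact_mod_cast Real.two_pi_pos.ne'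
    rw [Complex.real_smul, Complex.ofReal_inv] at this
    field_simp at this
    rw [this]; push_cast; rfl
  set a : ℝ → ℝ := fun θ => (A θ).re with ha
  have had : ∀ θ, HasDerivAt a ((P (e θ)).re) θ := by
    intro θ
    exact Complex.reCLM.hasFDerivAt.comp_hasDerivAt θ (hAd θ)
  have hamono : StrictMono a := by
    apply strictMono_of_deriv_pos
    intro θ
    rw [(had θ).deriv]
    exact hP _ (heD θ)
  have ha0 : a 0 = 0 := by simp [ha, hA0]
  have ha2 : a (2 * Real.pi) = 2 * Real.pi := by simp [ha, hA2]
  have hKe : ∀ θ, K (e θ) = K w * Complex.exp (I * A θ) := by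
    have hconst : ∀ θ, K (e θ) * Complex.exp (-(I * A θ)) = K w := by
      have hd : ∀ θ : ℝ, HasDerivAt (fun θ => K (e θ) * Complex.exp (-(I * A θ))) 0 θ := by
        intro θ
        have h1 := (hKd _ (heD θ)).comp_of_eq θ (hed θ) rfl
        have h2 := ((hAd θ).const_mul I).neg.cexp
        have h3 := h1.mul h2
        refine h3.congr_deriv ?_
        simp only [Function.comp, hK]
        ring
      intro θ
      have := is_const_of_deriv_eq_zero (fun θ => (hd θ).differentiableAt) (fun θ => (hd θ).deriv) θ 0
      rw [this, hA0]; simp [he]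
    intro θ
    rw [← hconst θ, mul_assoc, ← Complex.exp_add]
    simp
  set u : ℝ → ℝ := fun θ => ((Q w - Q (e θ)) / K w).re with hu
  have hud : ∀ θ, HasDerivAt u (Real.exp (-(A θ).im) * Real.sin (a θ)) θ := by
    intro θ
    have h1 := (hQ.differentiableAt (D_nhds (heD θ))).hasDerivAt.comp_of_eq θ (hed θ) rfl
    have h2 := (h1.const_sub (Q w)).div_const (K w)
    have h3 := Complex.reCLM.hasFDerivAt.comp_hasDerivAt θ h2
    refine h3.congr_deriv ?_
    have h4 : -(deriv Q (e θ) * (e θ * I)) / K w = -(Complex.exp (I * A θ) * I) := by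
      have : deriv Q (e θ) * (e θ * I) = K (e θ) * I := by simp only [hK]; ring
      rw [this, hKe]; field_simp
    rw [h4]
    simp only [Complex.reCLM_apply]
    simp [Complex.exp_im, ha]
  have hu0 : u 0 = 0 := by simp [hu, he]
  have hu2 : u (2 * Real.pi) = 0 := by
    have : Complex.exp (((2 * Real.pi : ℝ) : ℂ) * I) = 1 := by
      push_cast; exact Complex.exp_two_pi_mul_I
    simp only [hu, he]; rw [this]; simp
  have huc : Continuous u := by
    rw [continuous_iff_continuousAt]; exact fun θ => (hud θ).continuousAt
  obtain ⟨θ, hθ1, hθ2, hθe⟩ : ∃ θ : ℝ, 0 < θ ∧ θ < 2 * Real.pi ∧ e θ = ω := by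
    have hz : ‖ω / w‖ = 1 := by
      rw [norm_div, hn, div_self (norm_ne_zero_iff.2 hw0)]
    have hexp : Complex.exp ((ω / w).arg * I) = ω / w := by
      have := Complex.norm_mul_exp_arg_mul_I (ω / w)
      rwa [hz, Complex.ofReal_one, one_mul] at this
    have h1 := Complex.neg_pi_lt_arg (ω / w)
    have h2 := Complex.arg_le_pi (ω / w)
    have hane : (ω / w).arg ≠ 0 := by
      intro h
      rw [h] at hexp
      simp at hexp
      rw [eq_comm, div_eq_one_iff_eq hw0] at hexp
      exact hne hexp
    rcases lt_or_gt_of_ne hane with h | h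
    · refine ⟨(ω / w).arg + 2 * Real.pi, by linarith, by linarith, ?_⟩
      simp only [he]
      push_cast
      rw [add_mul, Complex.exp_add, hexp, Complex.exp_two_pi_mul_I]
      field_simp
    · refine ⟨(ω / w).arg, h, by linarith [Real.pi_pos], ?_⟩
      simp only [he]
      rw [hexp]; field_simp
  rw [← hθe]
  change 0 < u θ
  rcases le_or_gt (a θ) Real.pi with h | h
  · have hm : StrictMonoOn u (Icc 0 θ) := by
      apply strictMonoOn_of_deriv_pos (convex_Icc _ _) huc.continuousOn
      intro x hx
      rw [interior_Icc] at hx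
      rw [(hud x).deriv]
      have h1 := hamono hx.1
      have h2 := hamono hx.2
      exact mul_pos (Real.exp_pos _) (Real.sin_pos_of_pos_of_lt_pi (by linarith) (by linarith))
    have := hm (left_mem_Icc.2 hθ1.le) (right_mem_Icc.2 hθ1.le) hθ1
    linarith
  · have hm : StrictAntiOn u (Icc θ (2 * Real.pi)) := by
      apply strictAntiOn_of_deriv_neg (convex_Icc _ _) huc.continuousOn
      intro x hx
      rw [interior_Icc] at hx
      rw [(hud x).deriv]
      have h1 := hamono hx.1
      have h2 := hamono hx.2
      have h3 : Real.sin (a x) < 0 := by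
        rw [← Real.sin_sub_two_pi]
        apply Real.sin_neg_of_neg_of_neg_pi_lt <;> linarith
      nlinarith [Real.exp_pos (-(A x).im)]
    have := hm (left_mem_Icc.2 hθ2.le) (right_mem_Icc.2 hθ2.le) hθ2
    linarith

lemma disk_support {Q : ℂ → ℂ} (hQ : DifferentiableOn ℂ Q 𝔻) (hQ' : ∀ z ∈ 𝔻, deriv Q z ≠ 0)
    (hP : ∀ z ∈ 𝔻, 0 < (1 + z * deriv (deriv Q) z / deriv Q z).re)
    {w ω : ℂ} (hw : w ∈ 𝔻) (hn : ‖ω‖ ≤ ‖w‖) (hne : ω ≠ w) :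
    0 < ((Q w - Q ω) / (w * deriv Q w)).re := by
  have hw0 : w ≠ 0 := by
    rintro rfl
    simp at hn; exact hne hn
  rcases hn.lt_or_eq with h | h
  swap
  · exact circle_support hQ hQ' hP hw hw0 h hne
  have hr : 0 < ‖w‖ := norm_pos_iff.2 hw0
  refine re_pos_of_sphere (F := fun ω => (Q w - Q ω) / (w * deriv Q w)) hr ?_ ?_ ?_ ω h
  · apply DifferentiableOn.diffContOnCl
    rw [closure_ball _ hr.ne']
    refine ((hQ.mono ?_).const_sub _).div_const _
    intro z hz
    have : ‖z‖ ≤ ‖w‖ := by simpa using hz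
    exact mem_D.2 (this.trans_lt (mem_D.1 hw))
  · intro z hz
    by_cases hzw : z = w
    · simp [hzw]
    · exact (circle_support hQ hQ' hP hw hw0 hz hzw).le
  · refine ⟨-w, norm_neg w, circle_support hQ hQ' hP hw hw0 (norm_neg w) ?_⟩
    intro h
    exact hw0 (self_eq_neg.1 h.symm)

lemma convex_injOn {Q : ℂ → ℂ} (hQ : DifferentiableOn ℂ Q 𝔻) (hQ' : ∀ z ∈ 𝔻, deriv Q z ≠ 0)
    (hP : ∀ z ∈ 𝔻, 0 < (1 + z * deriv (deriv Q) z / deriv Q z).re) : InjOn Q 𝔻 := by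
  intro x hx y hy hxy
  by_contra hne
  rcases le_total ‖x‖ ‖y‖ with h | h
  · have := disk_support hQ hQ' hP hy h hne
    simp [hxy] at this
  · have := disk_support hQ hQ' hP hx h (Ne.symm hne)
    simp [hxy] at this

lemma two_point {Q : ℂ → ℂ} (hQ : DifferentiableOn ℂ Q 𝔻) (hQ' : ∀ z ∈ 𝔻, deriv Q z ≠ 0)
    (hP : ∀ z ∈ 𝔻, 0 < (1 + z * deriv (deriv Q) z / deriv Q z).re)
    {w ω : ℂ} (hw : w ∈ 𝔻) (hn : ‖ω‖ < ‖w‖) :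
    0 < ((w * deriv Q w - ω * deriv Q ω) / (Q w - Q ω)).re := by
  have hQd : DifferentiableOn ℂ (deriv Q) 𝔻 := hQ.deriv isOpen_D
  set K : ℂ → ℂ := fun z => z * deriv Q z with hK
  have hKd : DifferentiableOn ℂ K 𝔻 := differentiableOn_id.mul hQd
  have hw0 : w ≠ 0 := by
    rintro rfl
    simp at hn
    exact absurd (norm_nonneg ω) (not_le.2 hn)
  have hr : 0 < ‖w‖ := norm_pos_iff.2 hw0
  have hinj := convex_injOn hQ hQ' hP
  have hdK : DifferentiableOn ℂ (dslope K w) 𝔻 := (differentiableOn_dslope (D_nhds hw)).2 hKd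
  have hdQ : DifferentiableOn ℂ (dslope Q w) 𝔻 := (differentiableOn_dslope (D_nhds hw)).2 hQ
  have hval : ∀ z, z ≠ w → dslope K w z / dslope Q w z = (K w - K z) / (Q w - Q z) := by
    intro z hz
    rw [dslope_of_ne _ hz, dslope_of_ne _ hz, slope_def_field, slope_def_field,
      div_div_div_cancel_right₀ (sub_ne_zero.2 hz), ← neg_sub (K w), ← neg_sub (Q w), neg_div_neg_eq]
  have hne0 : ∀ z ∈ 𝔻, dslope Q w z ≠ 0 := by
    intro z hz
    by_cases hzw : z = w
    · rw [hzw, dslope_same]; exact hQ' w hw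
    · rw [dslope_of_ne _ hzw, slope_def_field]
      refine div_ne_zero (sub_ne_zero.2 ?_) (sub_ne_zero.2 hzw)
      exact fun h => hzw (hinj hz hw h)
  have hwv : 0 < (dslope K w w / dslope Q w w).re := by
    rw [dslope_same, dslope_same]
    have h1 := (hasDerivAt_id w).mul (hQd.differentiableAt (D_nhds hw)).hasDerivAt
    have h2 : deriv K w = deriv Q w + w * deriv (deriv Q) w := by
      have : HasDerivAt K (deriv Q w + w * deriv (deriv Q) w) w := by
        refine h1.congr_deriv ?_
        simp
      exact this.deriv
    rw [h2]
    convert hP w hw using 2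
    have := hQ' w hw
    field_simp
  have hsph : ∀ z, ‖z‖ = ‖w‖ → 0 < (dslope K w z / dslope Q w z).re := by
    intro z hz
    by_cases hzw : z = w
    · rw [hzw]; exact hwv
    have hzD : z ∈ 𝔻 := by rw [mem_D, hz]; exact mem_D.1 hw
    rw [hval z hzw]
    have hz0 : z ≠ 0 := by rw [← norm_pos_iff, hz]; exact hr
    have h1 := circle_support hQ hQ' hP hw hw0 hz hzw
    have h2 := circle_support hQ hQ' hP hzD hz0 hz.symm (Ne.symm hzw)
    have inv_pos' : ∀ c : ℂ, 0 < c.re → 0 < (c⁻¹).re := by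
      intro c hc
      rw [Complex.inv_re]
      exact div_pos hc (Complex.normSq_pos.2 (by rintro rfl; simp at hc))
    have h3 := inv_pos' _ h1
    have h4 := inv_pos' _ h2
    rw [inv_div] at h3 h4
    have h5 : (K w - K z) / (Q w - Q z)
        = w * deriv Q w / (Q w - Q z) + z * deriv Q z / (Q z - Q w) := by
      rw [← neg_sub (Q w) (Q z), div_neg, sub_div]; rfl
    rw [h5, Complex.add_re]
    linarith
  have hω : ω ≠ w := by rintro rfl; exact lt_irrefl _ hn
  have := re_pos_of_sphere (F := fun z => dslope K w z / dslope Q w z) hr ?_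
    (fun z hz => (hsph z hz).le) ⟨w, rfl, hwv⟩ ω hn
  · rw [hval ω hω] at this
    exact this
  · apply DifferentiableOn.diffContOnCl
    rw [closure_ball _ hr.ne']
    refine (hdK.div hdQ hne0).mono ?_
    intro z hz
    have : ‖z‖ ≤ ‖w‖ := by simpa using hz
    exact mem_D.2 (this.trans_lt (mem_D.1 hw))

lemma key_claim {Q : ℂ → ℂ} (hQ : DifferentiableOn ℂ Q 𝔻) (hQ' : ∀ z ∈ 𝔻, deriv Q z ≠ 0)
    (hP : ∀ z ∈ 𝔻, 0 < (1 + z * deriv (deriv Q) z / deriv Q z).re)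
    {w ω : ℂ} (hw : w ∈ 𝔻) (hn : ‖ω‖ < ‖w‖) {k : ℝ} (hk : 1 ≤ k) :
    Q ω + ω * deriv Q ω ≠ Q w + k * (w * deriv Q w) := by
  intro heq
  have hω : ω ≠ w := by rintro rfl; exact lt_irrefl _ hn
  have h1 := disk_support hQ hQ' hP hw hn.le hω
  have h2 := two_point hQ hQ' hP hw hn
  have hD : Q w - Q ω ≠ 0 := by
    intro h; rw [h] at h1; simp at h1
  have h3 : (w * deriv Q w - ω * deriv Q ω) / (Q w - Q ω)
      = -1 - ((k - 1 : ℝ) : ℂ) * ((Q w - Q ω) / (w * deriv Q w))⁻¹ := by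
    rw [inv_div]
    field_simp
    push_cast
    linear_combination -heq
  have h4 : 0 < (((Q w - Q ω) / (w * deriv Q w))⁻¹).re := by
    rw [Complex.inv_re]
    exact div_pos h1 (Complex.normSq_pos.2 (by intro h; rw [h] at h1; simp at h1))
  rw [h3, Complex.sub_re, Complex.re_ofReal_mul] at h2
  simp only [Complex.neg_re, Complex.one_re] at h2
  nlinarith

lemma exists_min_bad {B : Set ℂ} (hB : B ⊆ 𝔻) (ho : IsOpen (𝔻 \ B)) (hne : B.Nonempty) :
    ∃ z0 ∈ B, ∀ z ∈ B, ‖z0‖ ≤ ‖z‖ := by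
  obtain ⟨b, hb⟩ := hne
  have hC : IsCompact (closedBall (0:ℂ) ‖b‖ \ (𝔻 \ B)) := (isCompact_closedBall 0 ‖b‖).diff ho
  have hCB : ∀ z ∈ closedBall (0:ℂ) ‖b‖ \ (𝔻 \ B), z ∈ B := by
    rintro z ⟨h1, h2⟩
    by_contra h
    refine h2 ⟨?_, h⟩
    have h3 : ‖z‖ ≤ ‖b‖ := by simpa using h1
    exact mem_D.2 (h3.trans_lt (mem_D.1 (hB hb)))
  obtain ⟨z0, hz0, hmin⟩ := hC.exists_isMinOn ⟨b, by simp, fun h => h.2 hb⟩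
    continuous_norm.continuousOn
  refine ⟨z0, hCB z0 hz0, fun z hz => ?_⟩
  rcases le_total ‖z‖ ‖b‖ with h | h
  · exact hmin ⟨by simpa using h, fun h => h.2 hz⟩
  · exact (show ‖z0‖ ≤ ‖b‖ by simpa using hz0.1).trans h

/-- The averaging step: `Q` is convex. -/
lemma convex_of_avg {h Q : ℂ → ℂ} (hh : DifferentiableOn ℂ h 𝔻) (hh' : ∀ z ∈ 𝔻, deriv h z ≠ 0)
    (hre : ∀ z ∈ 𝔻, (-1/2 : ℝ) < (1 + z * deriv (deriv h) z / deriv h z).re)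
    (hQ : DifferentiableOn ℂ Q 𝔻) (hQh : ∀ z ∈ 𝔻, Q z + z * deriv Q z = h z) :
    (∀ z ∈ 𝔻, deriv Q z ≠ 0) ∧
      ∀ z ∈ 𝔻, 0 < (1 + z * deriv (deriv Q) z / deriv Q z).re := by
  have hhd : DifferentiableOn ℂ (deriv h) 𝔻 := hh.deriv isOpen_D
  have hQd : DifferentiableOn ℂ (deriv Q) 𝔻 := hQ.deriv isOpen_D
  have e1 : ∀ z ∈ 𝔻, deriv h z = 2 * deriv Q z + z * deriv (deriv Q) z := by
    intro z hz
    have h1 := (hQ.differentiableAt (D_nhds hz)).hasDerivAt.add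
      ((hasDerivAt_id z).mul (hQd.differentiableAt (D_nhds hz)).hasDerivAt)
    have h2 : h =ᶠ[𝓝 z] (Q + id * deriv Q) := by
      filter_upwards [D_nhds hz] with x hx
      simp [hQh x hx]
    rw [(h1.congr_of_eventuallyEq h2).deriv]
    simp; ring
  set W : ℂ → ℂ := fun z => 1 - 2 * deriv Q z / deriv h z with hW
  have hWd : ∀ z ∈ 𝔻, HasDerivAt W (-((2 * deriv (deriv Q) z * deriv h z
      - 2 * deriv Q z * deriv (deriv h) z) / deriv h z ^ 2)) z := by
    intro z hz
    exact ((((hQd.differentiableAt (D_nhds hz)).hasDerivAt.const_mul 2).div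
      (hhd.differentiableAt (D_nhds hz)).hasDerivAt (hh' z hz)).const_sub 1)
  have hWdiff : DifferentiableOn ℂ W 𝔻 := fun z hz =>
    (hWd z hz).differentiableAt.differentiableWithinAt
  have h0D : (0:ℂ) ∈ 𝔻 := by simp [mem_D]
  have hW0 : W 0 = 0 := by
    have h1 := e1 0 h0D
    have h2 := hh' 0 h0D
    simp only [hW]
    rw [zero_mul, add_zero] at h1
    rw [← h1, div_self h2, sub_self]
  have hWe : ∀ z ∈ 𝔻, z * deriv W z
      = (1 - W z) * (z * deriv (deriv h) z / deriv h z) - 2 * W z := by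
    intro z hz
    rw [(hWd z hz).deriv]
    have h2 := hh' z hz
    simp only [hW]
    field_simp
    linear_combination (2 * deriv h z) * e1 z hz
  have hWlt : ∀ z ∈ 𝔻, ‖W z‖ < 1 := by
    by_contra! hcon
    obtain ⟨b, hb, hb1⟩ := hcon
    obtain ⟨z0, ⟨hz0D, hz0⟩, hmin⟩ := exists_min_bad (B := {z | z ∈ 𝔻 ∧ 1 ≤ ‖W z‖})
      (fun z hz => hz.1) (by
        have : 𝔻 \ {z | z ∈ 𝔻 ∧ 1 ≤ ‖W z‖} = 𝔻 ∩ W ⁻¹' (ball 0 1) := by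
          ext z
          simp only [Set.mem_sdiff, mem_ofPred_eq, mem_inter_iff, mem_preimage, mem_ball_zero_iff, not_and,
            not_le]
          tauto
        rw [this]
        exact hWdiff.continuousOn.isOpen_inter_preimage isOpen_D isOpen_ball) ⟨b, hb, hb1⟩
    have hz00 : z0 ≠ 0 := by
      rintro rfl
      rw [hW0] at hz0; norm_num at hz0
    set r := ‖z0‖ with hr
    have hrp : 0 < r := norm_pos_iff.2 hz00
    have hr1 : r < 1 := mem_D.1 hz0D
    have hmaps : MapsTo W (ball 0 r) (closedBall 0 1) := by
      intro z hz
      have h1 : ‖z‖ < r := by simpa using hz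
      by_contra h
      have h2 : 1 < ‖W z‖ := by simpa using h
      exact absurd (hmin z ⟨mem_D.2 (h1.trans hr1), h2.le⟩) (not_le.2 h1)
    have hsub : closure (ball (0:ℂ) r) ⊆ 𝔻 := by
      rw [closure_ball _ hrp.ne']
      intro z hz
      exact mem_D.2 ((show ‖z‖ ≤ r by simpa using hz).trans_lt hr1)
    have hmaps2 : MapsTo W (closure (ball 0 r)) (closure (closedBall 0 1)) :=
      hmaps.closure_of_continuousOn (hWdiff.continuousOn.mono hsub)
    rw [closure_ball _ hrp.ne', isClosed_closedBall.closure_eq] at hmaps2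
    have hW1 : ‖W z0‖ = 1 := le_antisymm (by simpa using hmaps2 (show z0 ∈ closedBall 0 r by simp [hr])) hz0
    have hle : ∀ z, ‖z‖ ≤ ‖z0‖ → ‖W z‖ * ‖z0‖ ≤ ‖W z0‖ * ‖z‖ := by
      intro z hz
      rw [hW1, one_mul]
      rcases hz.lt_or_eq with h | h
      · have := Complex.dist_le_div_mul_dist_of_mapsTo_ball (f := W) (c := 0) (R₁ := r) (R₂ := 1)
          (hWdiff.mono (subset_closure.trans hsub)) (by rw [hW0]; exact hmaps) (z := z) (by simpa using h)
        rw [hW0, dist_zero_right, dist_zero_right] at this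
        rw [← le_div_iff₀ hrp]
        calc _ ≤ _ := this
          _ = _ := by ring
      · rw [h]
        have : ‖W z‖ ≤ 1 := by simpa using hmaps2 (show z ∈ closedBall 0 r by simpa using hz)
        nlinarith
    obtain ⟨k, hk, hkW⟩ := jack (hWd z0 hz0D).differentiableAt hz00
      (by rw [← norm_pos_iff, hW1]; exact one_pos) hle
    have h3 := hWe z0 hz0D
    rw [hkW] at h3
    set N := z0 * deriv (deriv h) z0 / deriv h z0 with hN
    set V := W z0
    have hV1 : 1 - V ≠ 0 := by
      intro h
      have hV : V = 1 := by linear_combination -h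
      rw [hV] at h3
      have h4 : (k:ℂ) + 2 = 0 := by linear_combination h3
      have h5 : (k + 2 : ℝ) = 0 := by exact_mod_cast h4
      linarith
    have h4 : N = ((k + 2 : ℝ) : ℂ) * (V / (1 - V)) := by
      field_simp
      push_cast
      linear_combination -h3
    have h5 : (V / (1 - V)).re = -1/2 := by
      have hns : V.re * V.re + V.im * V.im = 1 := by
        have : Complex.normSq V = 1 := by rw [Complex.normSq_eq_norm_sq, hW1]; norm_num
        rwa [Complex.normSq_apply] at this
      have hns2 : Complex.normSq (1 - V) ≠ 0 := by simpa using hV1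
      have hns3 : Complex.normSq (1 - V) = 2 - 2 * V.re := by
        rw [Complex.normSq_apply]; simp; linarith
      rw [Complex.div_re, ← add_div, hns3, div_eq_iff (by rwa [hns3] at hns2)]
      simp; linarith
    have h6 := hre z0 hz0D
    rw [← hN, Complex.add_re, h4, Complex.re_ofReal_mul, h5] at h6
    simp only [Complex.one_re] at h6
    linarith
  have hWQ : ∀ z ∈ 𝔻, 2 * deriv Q z = (1 - W z) * deriv h z := by
    intro z hz
    have := hh' z hz
    simp only [hW]; field_simp; ring
  have hW1 : ∀ z ∈ 𝔻, 1 - W z ≠ 0 := by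
    intro z hz h
    have h1 : W z = 1 := by linear_combination -h
    have := hWlt z hz
    rw [h1] at this; norm_num at this
  have hQ' : ∀ z ∈ 𝔻, deriv Q z ≠ 0 := by
    intro z hz h
    have := hWQ z hz
    rw [h, mul_zero] at this
    exact mul_ne_zero (hW1 z hz) (hh' z hz) this.symm
  refine ⟨hQ', fun z hz => ?_⟩
  clear_value W
  have h1 : 1 + z * deriv (deriv Q) z / deriv Q z = (1 + W z) / (1 - W z) := by
    have a1 := hQ' z hz
    have a2 := hW1 z hz
    have a3 := hh' z hz
    field_simp
    linear_combination (-(1 - W z)) * e1 z hz - hWQ z hz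
  rw [h1]
  have hlt := hWlt z hz
  have hns : (W z).re * (W z).re + (W z).im * (W z).im < 1 := by
    have : Complex.normSq (W z) < 1 := by
      rw [Complex.normSq_eq_norm_sq]; nlinarith [norm_nonneg (W z)]
    rwa [Complex.normSq_apply] at this
  have hp : 0 < Complex.normSq (1 - W z) := Complex.normSq_pos.2 (hW1 z hz)
  rw [Complex.div_re, ← add_div]
  apply div_pos _ hp
  simp; linarith

lemma inv_hasDeriv {Q : ℂ → ℂ} (hQ : DifferentiableOn ℂ Q 𝔻) (hQ' : ∀ z ∈ 𝔻, deriv Q z ≠ 0)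
    (hinj : InjOn Q 𝔻) {ζ : ℂ} (hζ : ζ ∈ 𝔻) :
    HasDerivAt (Function.invFunOn Q 𝔻) (deriv Q ζ)⁻¹ (Q ζ) ∧ Q '' 𝔻 ∈ 𝓝 (Q ζ) := by
  have hs : HasStrictDerivAt Q (deriv Q ζ) ζ :=
    (hQ.analyticAt (D_nhds hζ)).hasStrictDerivAt
  have h1 := hs.to_localInverse (hQ' ζ hζ)
  have h2 := hs.eventually_right_inverse (hQ' ζ hζ)
  have h0 : hs.localInverse Q (deriv Q ζ) ζ (hQ' ζ hζ) (Q ζ) = ζ :=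
    HasStrictFDerivAt.localInverse_apply_image (hs.hasStrictFDerivAt_equiv (hQ' ζ hζ))
  have h3 : ∀ᶠ y in 𝓝 (Q ζ), hs.localInverse Q (deriv Q ζ) ζ (hQ' ζ hζ) y ∈ 𝔻 := by
    apply h1.hasDerivAt.continuousAt
    rw [h0]; exact D_nhds hζ
  constructor
  · refine h1.hasDerivAt.congr_of_eventuallyEq ?_
    filter_upwards [h2, h3] with y hy1 hy2
    have := hinj.leftInvOn_invFunOn hy2
    rwa [hy1] at this
  · filter_upwards [h2, h3] with y hy1 hy2
    exact ⟨_, hy2, hy1⟩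

lemma sub_aux {Q q ω : ℂ → ℂ} {s : ℝ} (hs : s < 1)
    (hQ : DifferentiableOn ℂ Q 𝔻) (hQ' : ∀ z ∈ 𝔻, deriv Q z ≠ 0)
    (hP : ∀ z ∈ 𝔻, 0 < (1 + z * deriv (deriv Q) z / deriv Q z).re) (hQ0 : Q 0 = 0)
    (hq : DifferentiableOn ℂ q 𝔻) (hq0 : q 0 = 0)
    (hω : DifferentiableOn ℂ ω 𝔻) (hωs : ∀ z ∈ 𝔻, ‖ω z‖ ≤ s * ‖z‖)
    (heq : ∀ z ∈ 𝔻, q z + z * deriv q z = Q (ω z) + ω z * deriv Q (ω z)) :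
    ∀ z ∈ 𝔻, q z ∈ Q '' 𝔻 := by
  have hinj := convex_injOn hQ hQ' hP
  have hQd : DifferentiableOn ℂ (deriv Q) 𝔻 := hQ.deriv isOpen_D
  have hqd : DifferentiableOn ℂ (deriv q) 𝔻 := hq.deriv isOpen_D
  have h0D : (0:ℂ) ∈ 𝔻 := by simp [mem_D]
  set w : ℂ → ℂ := fun z => Function.invFunOn Q 𝔻 (q z) with hw
  have hwQ : ∀ z ζ, ζ ∈ 𝔻 → q z = Q ζ → w z = ζ := by
    intro z ζ hζ h
    simp only [hw]; rw [h]; exact hinj.leftInvOn_invFunOn hζ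
  have hwd : ∀ z ∈ 𝔻, ∀ ζ ∈ 𝔻, q z = Q ζ → HasDerivAt w ((deriv Q ζ)⁻¹ * deriv q z) z := by
    intro z hz ζ hζ h
    exact (inv_hasDeriv hQ hQ' hinj hζ).1.comp_of_eq z
      (hq.differentiableAt (D_nhds hz)).hasDerivAt h.symm
  have hq0Q : q 0 = Q 0 := by rw [hq0, hQ0]
  have hw0 : w 0 = 0 := hwQ 0 0 h0D hq0Q
  have hω0 : ω 0 = 0 := by
    have := hωs 0 h0D
    simpa using this
  have hω'0 : ‖deriv ω 0‖ ≤ s := by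
    have hs0 : 0 ≤ s := by
      have := hωs (1/2) (by rw [mem_D]; norm_num)
      have h2 := norm_nonneg (ω (1/2))
      norm_num at this
      linarith
    refine (hω.differentiableAt (D_nhds h0D)).hasDerivAt.le_of_lip' hs0 ?_
    filter_upwards [D_nhds h0D] with x hx
    rw [hω0, sub_zero, sub_zero]; exact hωs x hx
  have hw'0 : HasDerivAt w (deriv ω 0) 0 := by
    refine (hwd 0 h0D 0 h0D hq0Q).congr_deriv ?_
    have hQat := (hQ.differentiableAt (D_nhds h0D)).hasDerivAt
    have hQdat := (hQd.differentiableAt (D_nhds h0D)).hasDerivAt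
    have hωat := (hω.differentiableAt (D_nhds h0D)).hasDerivAt
    have a1 := (hq.differentiableAt (D_nhds h0D)).hasDerivAt.add
      ((hasDerivAt_id 0).mul (hqd.differentiableAt (D_nhds h0D)).hasDerivAt)
    have a2 := (hQat.comp_of_eq 0 hωat hω0.symm).add (hωat.mul (hQdat.comp_of_eq 0 hωat hω0.symm))
    have a3 := a2.congr_of_eventuallyEq (f₁ := q + id * deriv q) (by
      filter_upwards [D_nhds h0D] with x hx
      simpa using heq x hx)
    have a4 := a1.unique a3
    simp [hω0] at a4
    have := hQ' 0 h0D
    field_simp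
    linear_combination a4 / 2
  set good : Set ℂ := {z | z ∈ 𝔻 ∧ (z = 0 ∨ (q z ∈ Q '' 𝔻 ∧ ‖w z‖ < ‖z‖))} with hgood
  have hgo : IsOpen good := by
    rw [isOpen_iff_mem_nhds]
    rintro z ⟨hzD, rfl | ⟨⟨ζ, hζ, hζq⟩, hlt⟩⟩
    · have h1 : ∀ᶠ z in 𝓝 (0:ℂ), z ≠ 0 → ‖w z‖ < ‖z‖ := by
        have h2 := (hasDerivAt_iff_tendsto_slope.1 hw'0).norm
        have h3 := h2.eventually (gt_mem_nhds (hω'0.trans_lt hs))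
        rw [eventually_nhdsWithin_iff] at h3
        filter_upwards [h3] with z hz hz0
        have h4 := hz hz0
        rw [slope_def_field, hw0, sub_zero, sub_zero, norm_div,
          div_lt_one (norm_pos_iff.2 hz0)] at h4
        exact h4
      have h5 : ∀ᶠ z in 𝓝 (0:ℂ), q z ∈ Q '' 𝔻 := by
        apply (hq.differentiableAt (D_nhds h0D)).continuousAt
        rw [hq0Q]; exact (inv_hasDeriv hQ hQ' hinj h0D).2
      filter_upwards [h1, h5, D_nhds h0D] with z a b c
      refine ⟨c, ?_⟩
      by_cases hz : z = 0
      · exact Or.inl hz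
      · exact Or.inr ⟨b, a hz⟩
    · have h5 : ∀ᶠ x in 𝓝 z, q x ∈ Q '' 𝔻 := by
        apply (hq.differentiableAt (D_nhds hzD)).continuousAt
        rw [← hζq]; exact (inv_hasDeriv hQ hQ' hinj hζ).2
      have hwc := (hwd z hzD ζ hζ hζq.symm).continuousAt
      have h6 : ∀ᶠ x in 𝓝 z, ‖w x‖ < ‖x‖ :=
        hwc.norm.eventually_lt continuous_norm.continuousAt hlt
      filter_upwards [h5, h6, D_nhds hzD] with x a b c
      exact ⟨c, Or.inr ⟨a, b⟩⟩
  by_contra! hcon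
  obtain ⟨b, hb, hbq⟩ := hcon
  obtain ⟨z0, ⟨hz0D, hz0⟩, hmin⟩ := exists_min_bad (B := 𝔻 \ good) (fun z hz => hz.1) (by
      have : 𝔻 \ (𝔻 \ good) = good := by
        ext z
        simp only [Set.mem_sdiff, hgood, mem_ofPred_eq]
        tauto
      rw [this]; exact hgo) ⟨b, hb, by
        rintro ⟨_, rfl | h⟩
        · exact hbq ⟨0, h0D, hq0Q.symm⟩
        · exact hbq h.1⟩
  have hz00 : z0 ≠ 0 := by
    rintro rfl
    exact hz0 ⟨h0D, Or.inl rfl⟩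
  set r := ‖z0‖ with hr
  have hrp : 0 < r := norm_pos_iff.2 hz00
  have hr1 : r < 1 := mem_D.1 hz0D
  have hcb : closedBall (0:ℂ) r ⊆ 𝔻 := by
    intro z hz
    exact mem_D.2 ((show ‖z‖ ≤ r by simpa using hz).trans_lt hr1)
  have hin : ∀ z, ‖z‖ < r → q z ∈ Q '' 𝔻 ∧ ‖w z‖ ≤ ‖z‖ := by
    intro z hz
    have hzD : z ∈ 𝔻 := mem_D.2 (hz.trans hr1)
    by_cases hzg : z ∈ good
    · obtain ⟨_, rfl | h⟩ := hzg
      · exact ⟨⟨0, h0D, hq0Q.symm⟩, by simp [hw0]⟩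
      · exact ⟨h.1, h.2.le⟩
    · exact absurd (hmin z ⟨hzD, hzg⟩) (not_le.2 hz)
  have hmaps : MapsTo q (ball 0 r) (Q '' closedBall 0 r) := by
    intro z hz
    have hz' : ‖z‖ < r := by simpa using hz
    obtain ⟨⟨ζ, hζ, h1⟩, h2⟩ := hin z hz'
    refine ⟨ζ, ?_, h1⟩
    rw [hwQ z ζ hζ h1.symm] at h2
    simpa using h2.trans hz'.le
  have hcl : IsClosed (Q '' closedBall 0 r) :=
    ((isCompact_closedBall 0 r).image_of_continuousOn (hQ.continuousOn.mono hcb)).isClosed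
  have hmaps2 : MapsTo q (closure (ball 0 r)) (closure (Q '' closedBall 0 r)) := by
    apply hmaps.closure_of_continuousOn
    rw [closure_ball _ hrp.ne']
    exact hq.continuousOn.mono hcb
  rw [closure_ball _ hrp.ne', hcl.closure_eq] at hmaps2
  obtain ⟨w0, hw0r, hw0q⟩ := hmaps2 (show z0 ∈ closedBall 0 r by simp [hr])
  have hw0D := hcb hw0r
  have hww : w z0 = w0 := hwQ z0 w0 hw0D hw0q.symm
  have hw0n : ‖w0‖ = r := by
    apply le_antisymm (by simpa using hw0r)
    by_contra h
    push Not at h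
    exact hz0 ⟨hz0D, Or.inr ⟨⟨w0, hw0D, hw0q⟩, by rw [hww]; exact h⟩⟩
  have hwd0 := hwd z0 hz0D w0 hw0D hw0q.symm
  obtain ⟨k, hk, hkw⟩ := jack hwd0.differentiableAt hz00
    (by rw [hww, ← norm_pos_iff, hw0n]; exact hrp) (by
      intro z hz
      rw [hww, hw0n, ← hr, mul_comm]
      apply mul_le_mul_of_nonneg_left _ hrp.le
      rcases hz.lt_or_eq with h | h
      · exact (hin z h).2
      · obtain ⟨ζ, hζ, hζq⟩ := hmaps2 (show z ∈ closedBall 0 r by simpa using hz)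
        rw [hwQ z ζ (hcb hζ) hζq.symm, h]
        simpa using hζ)
  rw [hwd0.deriv, hww] at hkw
  have hne := hQ' w0 hw0D
  have hkk : z0 * deriv q z0 = k * (w0 * deriv Q w0) := by
    field_simp at hkw
    linear_combination hkw
  have h1 := heq z0 hz0D
  rw [hkk, ← hw0q] at h1
  refine key_claim hQ hQ' hP hw0D ?_ hk h1.symm
  have := hωs z0 hz0D
  rw [hw0n]
  rw [← hr] at this
  nlinarith

lemma sub_main {Q q ω : ℂ → ℂ}
    (hQ : DifferentiableOn ℂ Q 𝔻) (hQ' : ∀ z ∈ 𝔻, deriv Q z ≠ 0)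
    (hP : ∀ z ∈ 𝔻, 0 < (1 + z * deriv (deriv Q) z / deriv Q z).re) (hQ0 : Q 0 = 0)
    (hq : DifferentiableOn ℂ q 𝔻) (hq0 : q 0 = 0)
    (hω : DifferentiableOn ℂ ω 𝔻) (hω0 : ω 0 = 0) (hωD : ∀ z ∈ 𝔻, ω z ∈ 𝔻)
    (heq : ∀ z ∈ 𝔻, q z + z * deriv q z = Q (ω z) + ω z * deriv Q (ω z)) :
    Subordinate q Q := by
  have hinj := convex_injOn hQ hQ' hP
  have h0D : (0:ℂ) ∈ 𝔻 := by simp [mem_D]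
  have hmem : ∀ z ∈ 𝔻, q z ∈ Q '' 𝔻 := by
    intro z hz
    obtain ⟨s, hs1, hs2⟩ := exists_between (mem_D.1 hz)
    have hsp : 0 < s := (norm_nonneg z).trans_lt hs1
    have hsD : ∀ x ∈ 𝔻, (s:ℂ) * x ∈ 𝔻 := by
      intro x hx
      rw [mem_D] at *
      rw [norm_mul, Complex.norm_real, Real.norm_of_nonneg hsp.le]
      nlinarith [norm_nonneg x]
    have hlin : DifferentiableOn ℂ (fun x : ℂ => (s:ℂ) * x) 𝔻 := by fun_prop
    have := sub_aux (q := fun x => q (s * x)) (ω := fun x => ω (s * x)) hs2 hQ hQ' hP hQ0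
      (hq.comp hlin hsD) (by simp [hq0]) (hω.comp hlin hsD) (by
        intro x hx
        have h1 := Complex.norm_le_norm_of_mapsTo_ball (f := ω) (R := 1) hω
          (fun y hy => ball_subset_closedBall (hωD y hy)) hω0 (mem_D.1 (hsD x hx))
        rwa [norm_mul, Complex.norm_real, Real.norm_of_nonneg hsp.le] at h1) (by
        intro x hx
        have h1 := heq _ (hsD x hx)
        rw [← h1, deriv_comp_mul_left]
        simp; ring) (z / s) (by
          rw [mem_D, norm_div, Complex.norm_real, Real.norm_of_nonneg hsp.le, div_lt_one hsp]
          exact hs1)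
    have hsc : (s:ℂ) ≠ 0 := by exact_mod_cast hsp.ne'
    simpa [mul_div_cancel₀, hsc] using this
  refine ⟨fun z => Function.invFunOn Q 𝔻 (q z), ?_, ?_, ?_, ?_⟩
  · intro z hz
    obtain ⟨ζ, hζ, h⟩ := hmem z hz
    exact ((inv_hasDeriv hQ hQ' hinj hζ).1.comp_of_eq z
      (hq.differentiableAt (D_nhds hz)).hasDerivAt h).differentiableAt.differentiableWithinAt
  · have := hinj.leftInvOn_invFunOn h0D
    rw [hQ0] at this
    simp only [hq0]
    exact this
  · intro z hz
    exact Function.invFunOn_mem (hmem z hz)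
  · intro z hz
    exact (Function.invFunOn_eq (hmem z hz)).symm

theorem stmt0 (ψ h f : ℂ → ℂ)
    (hψ : MaMinda ψ)
    (hhd : DifferentiableOn ℂ h 𝔻) (hh0 : h 0 = 0) (hh0' : deriv h 0 ≠ 0)
    (hre : ∀ z ∈ 𝔻, (-1/2 : ℝ) < (1 + z * deriv (deriv h) z / deriv h z).re)
    (hsub : Subordinate (fun z => ∫ s in (0:ℝ)..1, h ((s : ℂ) * z))
      (fun z => (ψ z - 1) / ψ z))
    (hf : IsClassA f)
    (hf0 : ∀ z ∈ 𝔻, z ≠ 0 → f z ≠ 0)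
    (hf' : ∀ z ∈ 𝔻, deriv f z ≠ 0)
    (hfh : Subordinate (fun z => f z * deriv (deriv f) z / (deriv f z) ^ 2) h) :
    StarlikeMM ψ f := by
  have h0D : (0:ℂ) ∈ 𝔻 := by simp [mem_D]
  have hh' : ∀ z ∈ 𝔻, deriv h z ≠ 0 := ne_zero_of_re (hhd.deriv isOpen_D) hh0' hre
  obtain ⟨hfd, hf00, hf01⟩ := hf
  have hfdd : DifferentiableOn ℂ (deriv f) 𝔻 := hfd.deriv isOpen_D
  obtain ⟨H, hH0, hH⟩ := (DifferentiableOn.isExactOn_ball (c := 0) (r := 1) hhd).with_val_at 0 0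
  have hHd : DifferentiableOn ℂ H 𝔻 := fun z hz => (hH z hz).differentiableAt.differentiableWithinAt
  set Q : ℂ → ℂ := dslope H 0 with hQdef
  have hQ : DifferentiableOn ℂ Q 𝔻 := (differentiableOn_dslope (D_nhds h0D)).2 hHd
  have hzQ : ∀ z, z * Q z = H z := by
    intro z
    have := sub_smul_dslope H 0 z
    simpa [hH0] using this
  have hQ0 : Q 0 = 0 := by
    rw [hQdef, dslope_same, (hH 0 h0D).deriv, hh0]
  have hQh : ∀ z ∈ 𝔻, Q z + z * deriv Q z = h z := by
    intro z hz
    have h1 := (hasDerivAt_id z).mul (hQ.differentiableAt (D_nhds hz)).hasDerivAt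
    have h2 : (id * Q) = H := by ext x; simpa using hzQ x
    rw [h2] at h1
    have := h1.unique (hH z hz)
    simpa using this
  have hQint : ∀ z ∈ 𝔻, Q z = ∫ s in (0:ℝ)..1, h ((s : ℂ) * z) := by
    intro z hz
    by_cases hz0 : z = 0
    · rw [hz0, hQ0]; simp [hh0]
    have hmem : ∀ t ∈ uIcc (0:ℝ) 1, (t:ℂ) * z ∈ 𝔻 := by
      intro t ht
      rw [uIcc_of_le zero_le_one] at ht
      rw [mem_D] at *
      rw [norm_mul, Complex.norm_real, Real.norm_of_nonneg ht.1]
      nlinarith [ht.2, norm_nonneg z, ht.1]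
    have hder : ∀ t ∈ uIcc (0:ℝ) 1, HasDerivAt (fun t : ℝ => H ((t:ℂ) * z)) (h (t * z) * z) t := by
      intro t ht
      have h2 : HasDerivAt (fun s : ℂ => s * z) z (t:ℂ) := by
        simpa using (hasDerivAt_id (t:ℂ)).mul_const z
      exact ((hH _ (hmem t ht)).comp (t:ℂ) h2).comp_ofReal
    have hint : IntervalIntegrable (fun t : ℝ => h (t * z) * z) MeasureTheory.volume 0 1 := by
      apply ContinuousOn.intervalIntegrable
      refine ContinuousOn.mul ?_ continuousOn_const
      exact hhd.continuousOn.comp (by fun_prop) hmem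
    have := intervalIntegral.integral_eq_sub_of_hasDerivAt hder hint
    rw [intervalIntegral.integral_mul_const] at this
    simp only [Complex.ofReal_one, one_mul, Complex.ofReal_zero, zero_mul, hH0, sub_zero] at this
    rw [← hzQ z] at this
    apply mul_left_cancel₀ hz0
    rw [← this]; ring
  obtain ⟨hQ', hP⟩ := convex_of_avg hhd hh' hre hQ hQh
  set g : ℂ → ℂ := dslope f 0 with hg
  have hgd : DifferentiableOn ℂ g 𝔻 := (differentiableOn_dslope (D_nhds h0D)).2 hfd
  have hzg : ∀ z, z * g z = f z := by
    intro z
    have := sub_smul_dslope f 0 z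
    simpa [hf00] using this
  have hg0 : g 0 = 1 := by rw [hg, dslope_same, hf01]
  set q : ℂ → ℂ := fun z => 1 - g z / deriv f z with hq
  have hqd : DifferentiableOn ℂ q 𝔻 := (hgd.div hfdd hf').const_sub 1
  have hq0 : q 0 = 0 := by simp [hq, hg0, hf01]
  have hqe : ∀ z ∈ 𝔻, q z + z * deriv q z = f z * deriv (deriv f) z / (deriv f z) ^ 2 := by
    intro z hz
    have h1 := (hasDerivAt_id z).mul (hqd.differentiableAt (D_nhds hz)).hasDerivAt
    have h2 : (id * q) = fun x => x - f x / deriv f x := by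
      ext x
      rw [← hzg x]; simp [hq]; ring
    rw [h2] at h1
    have h3 := (hasDerivAt_id z).sub ((hfd.differentiableAt (D_nhds hz)).hasDerivAt.div
      (hfdd.differentiableAt (D_nhds hz)).hasDerivAt (hf' z hz))
    have h4 := h1.unique h3
    have := hf' z hz
    simp only [id, one_mul] at h4
    rw [h4]
    field_simp
    ring
  obtain ⟨ω, hω, hω0, hωD, hωe⟩ := hfh
  obtain ⟨w, hw, hw0, hwD, hwe⟩ := sub_main hQ hQ' hP hQ0 hqd hq0 hω hω0 hωD (by
    intro z hz
    rw [hqe z hz, hQh _ (hωD z hz)]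
    exact hωe z hz)
  obtain ⟨v, hv, hv0, hvD, hve⟩ := hsub
  refine ⟨⟨hfd, hf00, hf01⟩, hf0, fun z => v (w z), hv.comp hw hwD, by simp [hw0, hv0],
    fun z hz => hvD _ (hwD z hz), fun z hz => ?_⟩
  have hψ1 : ψ 0 = 1 := hψ.2.2.2.1
  by_cases hz0 : z = 0
  · simp [hz0, hw0, hv0, hψ1]
  · simp only [hz0, if_false]
    have h1 := hwe z hz
    have h2 := hve (w z) (hwD z hz)
    have h3 := hQint (w z) (hwD z hz)
    have hpos := hψ.2.2.1 _ (hvD _ (hwD z hz))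
    simp only [] at h2
    rw [← h3, ← h1] at h2
    set Ψ := ψ (v (w z))
    have hΨ : Ψ ≠ 0 := by intro h; rw [h] at hpos; simp at hpos
    have hfz := hf0 z hz hz0
    have hf'z := hf' z hz
    have hgz : g z ≠ 0 := by
      intro h; rw [← hzg z, h, mul_zero] at hfz; exact hfz rfl
    simp only [hq] at h2
    have h5 : g z * Ψ = deriv f z := by
      have e1 : 1 - g z / deriv f z = 1 - 1 / Ψ := by
        rw [h2, sub_div, div_self hΨ]
      have e2 : g z / deriv f z = 1 / Ψ := by linear_combination -e1
      rw [div_eq_div_iff hf'z hΨ, one_mul] at e2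
      exact e2
    rw [← hzg z, ← h5]
    field_simp
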